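/- arXiv:2601.17945 — 2 statements merged into one kernel-verified Lean document; each statement's English description precedes it below -/
import Mathlib

section
/- Let a = a₁⋯a_p and b = b₁⋯b_q be words with pairwise distinct entries (no entry appears in both) and let 1 ≤ d ≤ q−1. Then there exists a unique word u such that: srw(u) is a rearrangement of the entries of b, u with srw(u) removed equals a, and srdes(u) = d. Moreover, for every word w whose entries are not in increasing order, taking a = w \ srw(w), b = srw(w) and d = srdes(w), this unique word u equals w. -/
/-!
Let `β₁ < ⋯ < β_q` be the letters of `b`.  A special reverse wave with these letters is determined
by the number `r` of letters in its decreasing run (first descent top included): it is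
`v_r = β₁ ⋯ β_{q-r} β_q β_{q-1} ⋯ β_{q-r+1}`, which has `r - 1` descents.  So every admissible `u`
is `v_r ++ a` for some `1 ≤ r ≤ q`, and it remains to see which `r` are allowed and how `srdes`
depends on `r`.

If `a` is empty, every `r` is allowed and `srdes u = r - 1`.  If `a` starts with `x`, let `j` be the
number of letters of `b` larger than `x`.  The wave stops exactly before `x` iff either `r < j`
(then `x` is smaller than the last letter of the run and some letter of the increasing part exceeds
`x`, and `srdes u = r`), or `j < r` and `2 ≤ r` (then `x` exceeds the last letter of the run, and
`srdes u = r - 1`).  Only `r = j` and `r = 1 > j` are excluded, so `r ↦ srdes u` is injective with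
image `{1, …, q - 1}`: `r = d` for `d < j` and `r = d + 1` for `d ≥ j`.

`srw_split` produces the decomposition `u = P ++ R ++ a`, `srw_of_halts` is its converse,
`halts_iff` translates the stopping condition into `j`, and `srdes_cons` computes `srdes`.
-/


namespace Paper

/-- number of descents of a word -/
def des : List ℕ → ℕ
  | a :: b :: t => (if b < a then 1 else 0) + des (b :: t)
  | _ => 0

/-- number of inversions of a word -/
def inv : List ℕ → ℕ
  | [] => 0
  | a :: t => (t.countP fun x => decide (x < a)) + inv t

/-- a word is (strictly) increasing -/
def Incr (w : List ℕ) : Prop := w.Chain' (· < ·)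

/-- a word is a hook: `a₁ > a₂` and `a₂ < a₃ < ⋯ < a_s`, length ≥ 2 -/
def IsHook : List ℕ → Prop
  | a :: b :: t => b < a ∧ (b :: t).Chain' (· < ·)
  | _ => False

/-- `(γ, hs)` is the hook factorization data of `w` -/
def IsHookFact (w γ : List ℕ) (hs : List (List ℕ)) : Prop :=
  Incr γ ∧ (∀ h ∈ hs, IsHook h) ∧ w = γ ++ hs.flatten

/-- the statistic `lec` computed from the hooks of a factorization -/
def lecVal (hs : List (List ℕ)) : ℕ := (hs.map inv).sum

/-- one-line word of `σ ∈ S_n`, with entries in `[1..n]` -/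
def word {n : ℕ} (σ : Equiv.Perm (Fin n)) : List ℕ :=
  List.ofFn fun i => (σ i : ℕ) + 1

/-- a word `w₁ ⋯ w_ℓ` with maximum in position `c` is a (nontrivial) reverse wave if
`c ≠ ℓ` and `w₁ < ⋯ < w_{c-1} < w_ℓ < w_{ℓ-1} < ⋯ < w_c`. -/
def IsRevWave (w : List ℕ) : Prop :=
  ∃ c, c + 1 < w.length ∧ (w.take c ++ (w.drop c).reverse).Chain' (· < ·)

/-- a word `w₁ ⋯ w_ℓ` with maximum in position `c` is a (nontrivial) wave if
`c ≠ ℓ` and `w_ℓ < w_{ℓ-1} < ⋯ < w_{c+1} < w₁ < ⋯ < w_c`. -/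
def IsWave (w : List ℕ) : Prop :=
  ∃ c, c + 1 < w.length ∧ ((w.drop (c + 1)).reverse ++ w.take (c + 1)).Chain' (· < ·)

/-- the maximal strictly decreasing run starting below `hi` and staying above `lo` -/
def decRun (hi lo : ℕ) : List ℕ → List ℕ
  | [] => []
  | b :: t => if b < hi ∧ lo < b then b :: decRun b lo t else []

def srwAux (lo : ℕ) : List ℕ → List ℕ
  | [] => []
  | [a] => [a]
  | a :: b :: t => if a < b then a :: srwAux a (b :: t) else a :: decRun a lo (b :: t)

/-- the special reverse wave of a word: the prefix `w₁ ⋯ w_s` where `t` is the position of the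
first descent (the whole word if none) and `s ≥ t` is maximal with
`w_t > w_{t+1} > ⋯ > w_s > w_{t-1}` (convention `w₀ = 0`). -/
def srw (w : List ℕ) : List ℕ := srwAux 0 w

/-- the number of special reverse descents: `des (srw w) + χ(w_s > w_{s+1})` -/
def srdes (w : List ℕ) : ℕ :=
  des (srw w) +
    match (srw w).getLast?, (w.drop (srw w).length).head? with
    | some x, some y => if y < x then 1 else 0
    | _, _ => 0

/-- the prefix `w₁ ⋯ w_t` of `w` ending at the position `t` of the first descent
(the whole word if there is no descent) -/
def incrPrefix : List ℕ → List ℕ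
  | [] => []
  | [a] => [a]
  | a :: b :: t => if a < b then a :: incrPrefix (b :: t) else [a]

/-- the special wave `w_r ⋯ w_t ⋯ w_s` of a word -/
def sw (w : List ℕ) : List ℕ :=
  let pre := incrPrefix w
  match w.drop pre.length with
  | [] => w
  | x :: rs =>
    let kept := pre.takeWhile fun u => decide (u < x)
    pre.drop kept.length ++ x :: decRun x (kept.getLastD 0) rs

/-- the word `w \ sw(w) = w₁ ⋯ w_{r-1} w_{s+1} ⋯ w_ℓ` obtained removing the special wave -/
def swCompl (w : List ℕ) : List ℕ :=
  let pre := incrPrefix w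
  match w.drop pre.length with
  | [] => []
  | x :: rs =>
    let kept := pre.takeWhile fun u => decide (u < x)
    kept ++ rs.drop (decRun x (kept.getLastD 0) rs).length

/-- insertion `ins(a,b) = a₁ ⋯ a_x b₁ ⋯ b_q a_{x+1} ⋯ a_p`, where `x` is maximal with
`a₁ < a₂ < ⋯ < a_x < b_q` -/
def ins (a b : List ℕ) : List ℕ :=
  let pfx := (incrPrefix a).takeWhile fun u => decide (u < b.getLastD 0)
  pfx ++ b ++ a.drop pfx.length

/-- the word `ρ = ρ₁ ⋯ ρ_m` (entries in `[1..n]`) associated to an injection `Fin m ↪ Fin n` -/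
def rho {n m : ℕ} (f : Fin m ↪ Fin n) : List ℕ :=
  List.ofFn fun j => (f j : ℕ) + 1

/-- descent number of the pair `(α₀, ρ)`: `des ρ + #{a ∈ α₀ : a > ρ₁}`,
where `α₀ = [n] \ {ρ₁, …, ρ_m}` -/
def desPair (n : ℕ) {m : ℕ} (f : Fin m ↪ Fin n) : ℕ :=
  des (rho f) + ((Finset.Icc 1 n).filter fun a => a ∉ rho f ∧ (rho f).headI < a).card

/-- descent number of the pair `(α₀, ρ)`, with `ρ` given as a list -/
def desPairL (n : ℕ) (ρ : List ℕ) : ℕ :=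
  des ρ + ((Finset.Icc 1 n).filter fun a => a ∉ ρ ∧ ρ.headI < a).card

/-- the map `μ`, sending `ρ` (with complementary set `α₀ = {α₁ < ⋯ < α_{n-k-1}}`) to
`α₁ ⋯ α_{n-k-m-1} α_{n-k-1} α_{n-k-2} ⋯ α_{n-k-m} ρ₁ ⋯ ρ_{k+1}`,
where `m = #{a ∈ α₀ : a > ρ₁}` -/
def mu (n : ℕ) (ρ : List ℕ) : List ℕ :=
  let A := ((Finset.Icc 1 n).filter fun a => a ∉ ρ).sort (· ≤ ·)
  let m := (A.filter fun a => decide (ρ.headI < a)).length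
  (A.take (A.length - m) ++ (A.drop (A.length - m)).reverse) ++ ρ

end Paper

namespace Paper

/-- `Halts lo P R a` says that the wave with increasing part `P`, decreasing run `R` and initial
bound `lo` is not continued by the first letter `x` of `a`: either `x` is not above the last letter
of `lo :: P`, or it is not below the last letter of `R`; and if `R` is a single letter, then `x` is
below it, so that the first descent really occurs there.  Comparisons with the last letter are
phrased existentially, which is equivalent for a monotone list. -/
def Halts (lo : ℕ) (P R a : List ℕ) : Prop :=
  ∀ x ∈ a.head?, ((∃ p ∈ lo :: P, x ≤ p) ∨ ∃ y ∈ R, y ≤ x) ∧ (2 ≤ R.length ∨ ∀ y ∈ R, x < y)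

/-! ### Decomposition of a word along its special reverse wave -/

lemma decRun_split (l : List ℕ) : ∀ hi lo : ℕ, lo < hi →
    ∃ a, l = decRun hi lo l ++ a ∧ (hi :: decRun hi lo l).Pairwise (· > ·) ∧
      (∀ y ∈ hi :: decRun hi lo l, lo < y) ∧
      ∀ x ∈ a.head?, x ≤ lo ∨ ∃ y ∈ hi :: decRun hi lo l, y ≤ x := by
  induction l with
  | nil => intro hi lo h; exact ⟨[], by simp [decRun, h]⟩
  | cons b t ih =>
    intro hi lo h
    by_cases hb : b < hi ∧ lo < b
    · obtain ⟨a, h1, h2, h3, h4⟩ := ih b lo hb.2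
      have e : decRun hi lo (b :: t) = b :: decRun b lo t := by simp [decRun, hb]
      rw [e]
      refine ⟨a, by simp [← h1], ?_, ?_, ?_⟩
      · rw [List.pairwise_cons]
        refine ⟨?_, h2⟩
        intro y hy
        rw [List.pairwise_cons] at h2
        rcases List.mem_cons.1 hy with rfl | hy
        · exact hb.1
        · exact (h2.1 y hy).trans hb.1
      · intro y hy
        rcases List.mem_cons.1 hy with rfl | hy
        · exact h
        · exact h3 y hy
      · intro x hx
        rcases h4 x hx with h4 | ⟨y, hy, h4⟩
        · exact Or.inl h4
        · exact Or.inr ⟨y, List.mem_cons_of_mem _ hy, h4⟩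
    · have e : decRun hi lo (b :: t) = [] := by simp only [decRun, if_neg hb]
      rw [e]
      refine ⟨b :: t, by simp, by simp, by simpa using h, ?_⟩
      intro x hx
      simp only [List.head?_cons, Option.mem_def, Option.some.injEq] at hx
      subst hx
      simp only [List.mem_singleton, exists_eq_left]
      omega

lemma srwAux_split (u : List ℕ) : ∀ lo : ℕ, u ≠ [] → u.Nodup → (∀ x ∈ u.head?, lo < x) →
    ∃ P R a, u = P ++ R ++ a ∧ srwAux lo u = P ++ R ∧ R ≠ [] ∧
      (lo :: (P ++ R.reverse)).Pairwise (· < ·) ∧ Halts lo P R a := by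
  induction u with
  | nil => intro lo h; exact absurd rfl h
  | cons c t ih =>
    intro lo _ hn hlo
    have hc : lo < c := hlo c (by simp)
    cases t with
    | nil => exact ⟨[], [c], [], by simp [srwAux, Halts, hc]⟩
    | cons b t =>
      by_cases hb : c < b
      · obtain ⟨P, R, a, h1, h2, h3, h4, h5⟩ :=
          ih c (by simp) (List.nodup_cons.1 hn).2 (by simpa using hb)
        refine ⟨c :: P, R, a, by simp [h1], by simp [srwAux, hb, h2], h3, ?_, ?_⟩
        · rw [List.cons_append, List.pairwise_cons]
          refine ⟨?_, h4⟩
          intro y hy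
          rw [List.pairwise_cons] at h4
          rcases List.mem_cons.1 hy with rfl | hy
          · exact hc
          · exact hc.trans (h4.1 y hy)
        · intro x hx
          obtain ⟨h6, h7⟩ := h5 x hx
          refine ⟨?_, h7⟩
          rcases h6 with ⟨p, hp, h6⟩ | h6
          · exact Or.inl ⟨p, List.mem_cons_of_mem _ hp, h6⟩
          · exact Or.inr h6
      · have hbc : b < c := by
          have : c ≠ b := by
            rintro rfl
            simp at hn
          omega
        obtain ⟨a, h1, h2, h3, h4⟩ := decRun_split (b :: t) c lo hc
        refine ⟨[], c :: decRun c lo (b :: t), a, by simpa using h1, by simp [srwAux, hb],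
          by simp, ?_, ?_⟩
        · rw [List.nil_append, List.pairwise_cons]
          refine ⟨fun y hy => h3 y (List.mem_reverse.1 hy), ?_⟩
          rw [List.pairwise_reverse]
          exact h2
        · intro x hx
          refine ⟨?_, ?_⟩
          · simpa using h4 x hx
          · generalize hD : decRun c lo (b :: t) = D at *
            cases D with
            | nil =>
              right
              simp only [List.nil_append] at h1
              subst h1
              simp only [List.head?_cons, Option.mem_def, Option.some.injEq] at hx
              subst hx
              simpa using hbc
            | cons _ _ => left; simp

lemma decRun_of_halts (r a : List ℕ) : ∀ hi lo : ℕ, (hi :: r).Pairwise (· > ·) →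
    (∀ y ∈ r, lo < y) → (∀ x ∈ a.head?, x ≤ lo ∨ ∃ y ∈ hi :: r, y ≤ x) →
    decRun hi lo (r ++ a) = r := by
  induction r with
  | nil =>
    intro hi lo _ _ h
    cases a with
    | nil => rfl
    | cons x t =>
      have := h x (by simp)
      simp only [List.mem_singleton, exists_eq_left] at this
      simp only [List.nil_append, decRun]
      rw [if_neg (by omega)]
  | cons c r ih =>
    intro hi lo hp hlo h
    rw [List.pairwise_cons] at hp
    have h1 : c < hi := hp.1 c (by simp)
    have h2 : lo < c := hlo c (by simp)
    simp only [List.cons_append, decRun, h1, h2, and_self, if_true]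
    rw [ih c lo hp.2 (fun y hy => hlo y (by simp [hy]))]
    intro x hx
    rcases h x hx with h | ⟨y, hy, h⟩
    · exact Or.inl h
    · rcases List.mem_cons.1 hy with rfl | hy
      · exact Or.inr ⟨c, by simp, by omega⟩
      · exact Or.inr ⟨y, hy, h⟩

lemma srwAux_of_halts (P R a : List ℕ) (hR : R ≠ []) : ∀ lo : ℕ,
    (lo :: (P ++ R.reverse)).Pairwise (· < ·) → Halts lo P R a →
    srwAux lo (P ++ R ++ a) = P ++ R := by
  induction P with
  | nil =>
    intro lo hp hs
    obtain ⟨c, r, rfl⟩ := List.exists_cons_of_ne_nil hR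
    rw [List.nil_append, List.pairwise_cons, List.pairwise_reverse] at hp
    have key : decRun c lo (r ++ a) = r := by
      apply decRun_of_halts r a c lo hp.2
      · intro y hy
        exact hp.1 y (by simp [hy])
      · intro x hx
        simpa using (hs x hx).1
    rw [List.nil_append, List.cons_append]
    cases hra : r ++ a with
    | nil =>
      rw [List.append_eq_nil_iff] at hra
      simp [srwAux, hra.1]
    | cons b t =>
      have hb : ¬ c < b := by
        cases r with
        | nil =>
          rw [List.nil_append] at hra
          subst hra
          have := (hs b (by simp)).2
          simp at this
          omega
        | cons b' r =>
          rw [List.cons_append, List.cons.injEq] at hra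
          have := (List.pairwise_cons.1 hp.2).1 b' (by simp)
          omega
      simp only [srwAux, if_neg hb]
      rw [← hra, key]
  | cons c P ih =>
    intro lo hp hs
    rw [List.cons_append, List.pairwise_cons] at hp
    have h1 := ih c hp.2 (by
      intro x hx
      obtain ⟨h6, h7⟩ := hs x hx
      refine ⟨?_, h7⟩
      rcases h6 with ⟨p, h, h6⟩ | h6
      · left
        rcases List.mem_cons.1 h with rfl | h
        · have := hp.1 c (by simp)
          exact ⟨c, by simp, by omega⟩
        · exact ⟨p, h, h6⟩
      · exact Or.inr h6)
    cases hPR : P ++ R ++ a with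
    | nil => simp_all
    | cons b t =>
      have hb : c < b := by
        apply (List.pairwise_cons.1 hp.2).1
        have : b ∈ P ++ R := by
          have : b ∈ (P ++ R ++ a).head? := by simp [hPR]
          have hne : P ++ R ≠ [] := by simp [hR]
          rw [List.head?_append_of_ne_nil _ hne] at this
          exact List.mem_of_mem_head? this
        simpa using this
      rw [List.cons_append, List.cons_append, hPR]
      simp only [srwAux, if_pos hb]
      rw [← hPR, h1]

lemma srw_split (u : List ℕ) (hu : u ≠ []) (hn : u.Nodup) (hpos : ∀ x ∈ u, 0 < x) :
    ∃ P R a, u = P ++ R ++ a ∧ srw u = P ++ R ∧ R ≠ [] ∧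
      (P ++ R.reverse).Pairwise (· < ·) ∧ Halts 0 P R a := by
  obtain ⟨P, R, a, h1, h2, h3, h4, h5⟩ :=
    srwAux_split u 0 hu hn (fun x hx => hpos x (List.mem_of_mem_head? hx))
  exact ⟨P, R, a, h1, h2, h3, (List.pairwise_cons.1 h4).2, h5⟩

lemma srw_of_halts (P R a : List ℕ) (hR : R ≠ []) (hp : (P ++ R.reverse).Pairwise (· < ·))
    (hpos : ∀ x ∈ P ++ R, 0 < x) (hs : Halts 0 P R a) : srw (P ++ R ++ a) = P ++ R := by
  apply srwAux_of_halts P R a hR 0 _ hs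
  rw [List.pairwise_cons]
  exact ⟨fun y hy => hpos y (by simpa using hy), hp⟩

/-! ### The statistic `srdes` of a decomposed word -/

lemma des_dec (R : List ℕ) (h : R.Pairwise (· > ·)) : des R = R.length - 1 := by
  induction R with
  | nil => rfl
  | cons c R ih =>
    cases R with
    | nil => rfl
    | cons b R =>
      rw [List.pairwise_cons] at h
      have hb : b < c := h.1 b (by simp)
      simp [des, hb, ih h.2]
      omega

lemma des_wave (P R : List ℕ) (hp : (P ++ R.reverse).Pairwise (· < ·)) :
    des (P ++ R) = R.length - 1 := by
  induction P with
  | nil =>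
    rw [List.nil_append, List.pairwise_reverse] at hp
    exact des_dec R hp
  | cons c P ih =>
    rw [List.cons_append, List.pairwise_cons] at hp
    have h := ih hp.2
    cases hPR : P ++ R with
    | nil =>
      obtain ⟨rfl, rfl⟩ := List.append_eq_nil_iff.1 hPR
      rfl
    | cons b t =>
      have hb : c < b := by
        apply hp.1
        have : b ∈ P ++ R := by simp [hPR]
        simpa using this
      rw [List.cons_append, hPR]
      simp only [des, if_neg hb.not_gt]
      rw [← hPR, h, zero_add]

lemma srdes_nil (P R : List ℕ) (hp : (P ++ R.reverse).Pairwise (· < ·))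
    (hs : srw (P ++ R ++ []) = P ++ R) : srdes (P ++ R ++ []) = R.length - 1 := by
  unfold srdes
  rw [hs, des_wave P R hp]
  simp

/-- The number `j` of letters of the wave exceeding the next letter `x` decides whether the
wave stops before `x`. -/
lemma halts_iff (P R a : List ℕ) (x : ℕ) (hR : R ≠ []) (hp : (P ++ R.reverse).Pairwise (· < ·))
    (hx : x ∉ P ++ R) (hx0 : 0 < x) :
    Halts 0 P R (x :: a) ↔
      R.length < (P ++ R).countP (fun y => decide (x < y)) ∨
      ((P ++ R).countP (fun y => decide (x < y)) < R.length ∧ 2 ≤ R.length) := by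
  have hcR : R.countP (fun y => decide (x < y)) ≤ R.length := List.countP_le_length
  have hall : R.countP (fun y => decide (x < y)) = R.length ↔ ∀ y ∈ R, x < y := by
    rw [List.countP_eq_length]; simp
  have hP0 : P.countP (fun y => decide (x < y)) = 0 ↔ ∀ p ∈ P, p ≤ x := by
    rw [List.countP_eq_zero]; simp
  have hcross : ∀ p ∈ P, ∀ y ∈ R, p < y := fun p hp1 y hy1 =>
    (List.pairwise_append.1 hp).2.2 p hp1 y (List.mem_reverse.2 hy1)
  -- A letter of `P` above `x` forces the whole run to be above `x`.
  have hPR : P.countP (fun y => decide (x < y)) ≠ 0 →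
      R.countP (fun y => decide (x < y)) = R.length := by
    intro h
    rw [Ne, hP0] at h
    push Not at h
    obtain ⟨p, h1, h2⟩ := h
    exact hall.2 fun y hy => h2.trans (hcross p h1 y hy)
  have hs : Halts 0 P R (x :: a) ↔
      (P.countP (fun y => decide (x < y)) ≠ 0 ∨ R.countP (fun y => decide (x < y)) ≠ R.length) ∧
      (2 ≤ R.length ∨ R.countP (fun y => decide (x < y)) = R.length) := by
    rw [Ne, Ne, hP0, hall]
    have hne : ∀ p ∈ P, x ≤ p ↔ x < p := fun p h =>
      ⟨fun h' => lt_of_le_of_ne h' (by rintro rfl; exact hx (by simp [h])), le_of_lt⟩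
    constructor
    · intro h
      obtain ⟨h1, h2⟩ := h x (by simp)
      refine ⟨?_, h2⟩
      rcases h1 with ⟨p, h, h1⟩ | ⟨y, h, h1⟩
      · rcases List.mem_cons.1 h with rfl | h
        · omega
        · exact Or.inl fun h' => absurd ((hne p h).1 h1) (h' p h).not_gt
      · exact Or.inr fun h' => absurd (h' y h) h1.not_gt
    · rintro ⟨h1, h2⟩ y hy
      simp only [List.head?_cons, Option.mem_def, Option.some.injEq] at hy
      subst hy
      refine ⟨?_, h2⟩
      push Not at h1
      rcases h1 with ⟨p, h, h1⟩ | h1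
      · exact Or.inl ⟨p, by simp [h], h1.le⟩
      · exact Or.inr h1
  rw [hs, List.countP_append]
  have := List.length_pos_of_ne_nil hR
  omega

lemma srdes_cons (P R a : List ℕ) (x : ℕ) (hR : R ≠ [])
    (hp : (P ++ R.reverse).Pairwise (· < ·))
    (hs : srw (P ++ R ++ x :: a) = P ++ R) :
    (R.length < (P ++ R).countP (fun y => decide (x < y)) →
      srdes (P ++ R ++ x :: a) = R.length) ∧
    ((P ++ R).countP (fun y => decide (x < y)) < R.length →
      srdes (P ++ R ++ x :: a) = R.length - 1) := by
  have hpos := List.length_pos_of_ne_nil hR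
  obtain ⟨R, z, rfl⟩ := List.eq_nil_or_concat R |>.resolve_left hR
  rw [List.concat_eq_append] at *
  have hpw := List.pairwise_append.1 hp
  have hRz : ∀ y ∈ R, z < y := by
    have := hpw.2.1
    rw [List.pairwise_reverse, List.pairwise_append] at this
    exact fun y hy => this.2.2 y hy z (by simp)
  have hval : srdes (P ++ (R ++ [z]) ++ x :: a) =
      ((R ++ [z]).length - 1) + if x < z then 1 else 0 := by
    unfold srdes
    rw [hs, des_wave _ _ hp, List.drop_left]
    have : (P ++ (R ++ [z])).getLast? = some z := by
      rw [← List.append_assoc]; simp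
    rw [this]
    rfl
  rw [hval, List.countP_append]
  constructor
  · intro h
    have : x < z := by
      by_contra hzx
      have h0 : P.countP (fun y => decide (x < y)) = 0 := by
        rw [List.countP_eq_zero]
        intro p h
        have := hpw.2.2 p h z (by simp)
        simp; omega
      have : (R ++ [z]).countP (fun y => decide (x < y)) ≤ (R ++ [z]).length :=
        List.countP_le_length
      omega
    rw [if_pos this]; omega
  · intro h
    have : ¬ x < z := by
      intro hzx
      have : (R ++ [z]).countP (fun y => decide (x < y)) = (R ++ [z]).length := by
        rw [List.countP_eq_length]
        intro y hy
        rcases List.mem_append.1 hy with hy | hy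
        · have := hRz y hy
          simp; omega
        · simp_all
      omega
    rw [if_neg this]; rfl

/-! ### Existence and uniqueness -/

/-- A word is determined by the letters of its special reverse wave, the remaining suffix, and
the number of special reverse descents; this holds for increasing words as well. -/
lemma unique_word (u w : List ℕ) (hu : u.Nodup) (hu0 : ∀ x ∈ u, 0 < x) (hw : w.Nodup)
    (hw0 : ∀ x ∈ w, 0 < x) (h1 : (srw u).Perm (srw w))
    (h2 : u.drop (srw u).length = w.drop (srw w).length) (h3 : srdes u = srdes w) : u = w := by
  have h0 : srw [] = [] := rfl
  by_cases hue : u = []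
  · subst hue
    rw [h0] at h1 h2
    rw [← List.Perm.nil_eq h1] at h2
    simpa using h2
  by_cases hwe : w = []
  · subst hwe
    rw [h0] at h1 h2
    rw [List.Perm.eq_nil h1] at h2
    simpa using h2
  obtain ⟨P, R, a, ru, su, hR, hp, hs⟩ := srw_split u hue hu hu0
  obtain ⟨P', R', a', rw', sw', hR', hp', hs'⟩ := srw_split w hwe hw hw0
  have haa : a = a' := by
    rw [su, sw', ru, rw', List.drop_left, List.drop_left] at h2
    exact h2
  subst haa
  rw [su, sw'] at h1
  have hsort : P ++ R.reverse = P' ++ R'.reverse := by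
    refine List.Perm.eq_of_pairwise (le := (· < ·)) ?_ hp hp' ?_
    · intro x y _ _ h h'; exact absurd h (lt_asymm h')
    · exact ((List.reverse_perm R).append_left P).trans
        (h1.trans ((List.reverse_perm R').append_left P').symm)
  have hlen : R.length = R'.length := by
    have l1 := List.length_pos_of_ne_nil hR
    have l2 := List.length_pos_of_ne_nil hR'
    rw [ru] at su hu hu0
    rw [rw'] at sw' hw hw0
    rw [ru, rw'] at h3
    cases a with
    | nil =>
      rw [srdes_nil P R hp su, srdes_nil P' R' hp' sw'] at h3
      omega
    | cons x a =>
      have hx : x ∉ P ++ R := fun h => (List.nodup_append.1 hu).2.2 x h x (by simp) rfl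
      have hx' : x ∉ P' ++ R' := fun h => (List.nodup_append.1 hw).2.2 x h x (by simp) rfl
      have hx0 : 0 < x := hu0 x (by simp)
      rw [halts_iff P R a x hR hp hx hx0] at hs
      rw [halts_iff P' R' a x hR' hp' hx' hx0] at hs'
      have d := srdes_cons P R a x hR hp su
      have d' := srdes_cons P' R' a x hR' hp' sw'
      rw [h1.countP_eq] at hs d
      omega
  obtain ⟨e1, e2⟩ := List.append_inj' hsort (by simpa using hlen)
  rw [ru, rw', e1, List.reverse_injective e2]

/-- The letters of `b` can be arranged into a wave `P ++ R` whose decreasing run `R` has any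
prescribed length `r`. -/
lemma exists_wave (b : List ℕ) (hb : b.Nodup) (r : ℕ) (hr : r ≤ b.length) :
    ∃ P R : List ℕ, (P ++ R).Perm b ∧ R.length = r ∧ (P ++ R.reverse).Pairwise (· < ·) := by
  have hperm : (b.mergeSort (· ≤ ·)).Perm b := List.mergeSort_perm _ _
  have hsort : (b.mergeSort (· ≤ ·)).Pairwise (· < ·) := by
    have h1 : (b.mergeSort (· ≤ ·)).Pairwise (· ≤ ·) := List.pairwise_mergeSort' (· ≤ ·) b
    have h2 : (b.mergeSort (· ≤ ·)).Nodup := hperm.nodup_iff.2 hb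
    exact (h1.and h2).imp fun h => lt_of_le_of_ne h.1 h.2
  generalize b.mergeSort (· ≤ ·) = s at *
  refine ⟨s.take (s.length - r), (s.drop (s.length - r)).reverse, ?_, ?_, ?_⟩
  · refine ((List.reverse_perm _).append_left _).trans ?_
    rwa [List.take_append_drop]
  · have := hperm.length_eq
    simp
    omega
  · rwa [List.reverse_reverse, List.take_append_drop]

lemma exists_word (a b : List ℕ) (hn : (a ++ b).Nodup) (hpos : ∀ x ∈ a ++ b, 0 < x) (d : ℕ)
    (hd : 1 ≤ d) (hdb : d ≤ b.length - 1) :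
    ∃ u : List ℕ, (u.Nodup ∧ ∀ x ∈ u, 0 < x) ∧
      (srw u).Perm b ∧ u.drop (srw u).length = a ∧ srdes u = d := by
  have hb : b.Nodup := (List.nodup_append.1 hn).2.1
  -- It suffices to find a run length `r` for which the wave stops before `a` with `srdes = d`.
  suffices H : ∃ r, 1 ≤ r ∧ r ≤ b.length ∧ ∀ P R : List ℕ, (P ++ R).Perm b → R.length = r →
      (P ++ R.reverse).Pairwise (· < ·) → R ≠ [] → Halts 0 P R a ∧
      (srw (P ++ R ++ a) = P ++ R → srdes (P ++ R ++ a) = d) by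
    obtain ⟨r, hr1, hr, H⟩ := H
    obtain ⟨P, R, h1, h2, h3⟩ := exists_wave b hb r hr
    have hR : R ≠ [] := by rintro rfl; simp at h2; omega
    obtain ⟨h4, h5⟩ := H P R h1 h2 h3 hR
    have hperm : (P ++ R ++ a).Perm (a ++ b) :=
      (h1.append_right a).trans List.perm_append_comm
    have hs := srw_of_halts P R a hR h3
      (fun x hx => hpos x (List.mem_append_right _ (h1.mem_iff.1 hx))) h4
    refine ⟨P ++ R ++ a, ⟨hperm.nodup_iff.2 hn, fun x hx => hpos x (hperm.mem_iff.1 hx)⟩, ?_, ?_,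
      h5 hs⟩
    · rwa [hs]
    · rw [hs, List.drop_left]
  cases a with
  | nil =>
    refine ⟨d + 1, by omega, by omega, fun P R h1 h2 h3 hR => ⟨by simp [Halts], fun hs => ?_⟩⟩
    rw [srdes_nil P R h3 hs]
    omega
  | cons x a =>
    have hx : x ∉ b := fun h => (List.nodup_append.1 hn).2.2 x (by simp) x h rfl
    have hx0 : 0 < x := hpos x (by simp)
    refine ⟨if d < b.countP (fun y => decide (x < y)) then d else d + 1, ?_, ?_, ?_⟩
    · split_ifs <;> omega
    · split_ifs <;> omega
    · intro P R h1 h2 h3 hR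
      rw [halts_iff P R a x hR h3 (fun h => hx (h1.mem_iff.1 h)) hx0]
      have key := srdes_cons P R a x hR h3
      rw [h1.countP_eq] at key ⊢
      split_ifs at h2 with h
      · exact ⟨by omega, fun hs => by have := key hs; omega⟩
      · exact ⟨by omega, fun hs => by have := key hs; omega⟩

end Paper

/-- given words `a`, `b` with pairwise distinct entries and `1 ≤ d ≤ q - 1`
(`q` the length of `b`), there is a unique word `u` such that `srw u` is a rearrangement of
`b`, removing `srw u` from `u` yields `a`, and `srdes u = d`.  Moreover, for every word `w`
not in increasing order, the unique word associated to `(w \ srw w, srw w, srdes w)` is `w`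
itself. -/
theorem Paper.statement8 :
    (∀ a b : List ℕ, (a ++ b).Nodup → (∀ x ∈ a ++ b, 0 < x) →
      ∀ d : ℕ, 1 ≤ d → d ≤ b.length - 1 →
      ∃! u : List ℕ, (u.Nodup ∧ ∀ x ∈ u, 0 < x) ∧
        (srw u).Perm b ∧ u.drop (srw u).length = a ∧ srdes u = d) ∧
    (∀ w : List ℕ, w.Nodup → (∀ x ∈ w, 0 < x) → ¬ Incr w →
      ∀ u : List ℕ, (u.Nodup ∧ ∀ x ∈ u, 0 < x) →
        (srw u).Perm (srw w) → u.drop (srw u).length = w.drop (srw w).length →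
        srdes u = srdes w → u = w) := by
  refine ⟨fun a b hn hpos d hd hdb => ?_, fun w hw hw0 _ u hu h1 h2 h3 =>
    Paper.unique_word u w hu.1 hu.2 hw hw0 h1 h2 h3⟩
  obtain ⟨u, hu, h1, h2, h3⟩ := Paper.exists_word a b hn hpos d hd hdb
  refine ⟨u, ⟨hu, h1, h2, h3⟩, ?_⟩
  rintro v ⟨hv, h1', h2', h3'⟩
  exact Paper.unique_word v u hv.1 hv.2 hu.1 hu.2 (h1'.trans h1.symm) (h2'.trans h2.symm)
    (h3'.trans h3.symm)
end

section
/- For every n there exists a bijection θ of the symmetric group S_n such that for all σ ∈ S_n: des(σ) = lec(θ(σ)), and the rightmost hook in the hook factorization of θ(σ) has the same length and the same set of entries as the special reverse wave srw(σ) of σ. -/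
namespace Paper

/-! ### Hooks on a given set of entries -/

/-- The hook on the entries of the increasing word `S` having `e` inversions: the entry of index
`e` is moved to the front. For `e = 0` this is `S` itself. -/
def hook (S : List ℕ) (e : ℕ) : List ℕ := S.getD e 0 :: S.eraseIdx e

lemma hook_perm {S : List ℕ} {e : ℕ} (he : e < S.length) : (hook S e).Perm S := by
  unfold hook
  rw [List.getD_eq_getElem _ _ he]
  exact List.getElem_cons_eraseIdx_perm he

lemma inv_of_pairwise {S : List ℕ} (hS : S.Pairwise (· < ·)) : inv S = 0 := by
  induction S with
  | nil => rfl
  | cons a t ih =>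
    rw [List.pairwise_cons] at hS
    simp only [inv, ih hS.2, Nat.add_zero, List.countP_eq_zero]
    intro b hb
    have := hS.1 b hb
    simp; omega

lemma countP_eraseIdx {S : List ℕ} (hS : S.Pairwise (· < ·)) {e : ℕ} (he : e < S.length) :
    (S.eraseIdx e).countP (fun x => decide (x < S[e])) = e := by
  induction S generalizing e with
  | nil => simp at he
  | cons a t ih =>
    rw [List.pairwise_cons] at hS
    cases e with
    | zero =>
      simp only [List.eraseIdx_cons_zero, List.getElem_cons_zero, List.countP_eq_zero]
      intro b hb
      have := hS.1 b hb
      simp; omega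
    | succ e =>
      have he' : e < t.length := by simpa using he
      have := hS.1 _ (List.getElem_mem he')
      simp [ih hS.2 he', this]

lemma inv_hook {S : List ℕ} (hS : S.Pairwise (· < ·)) {e : ℕ} (he : e < S.length) :
    inv (hook S e) = e := by
  unfold hook
  rw [List.getD_eq_getElem _ _ he, inv, countP_eraseIdx hS he,
    inv_of_pairwise (hS.sublist (List.eraseIdx_sublist _ _)), Nat.add_zero]

lemma isHook_hook {S : List ℕ} (hS : S.Pairwise (· < ·)) {e : ℕ} (he : e < S.length)
    (h0 : 0 < e) : IsHook (hook S e) := by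
  have hp := hS.sublist (List.eraseIdx_sublist S e)
  unfold hook
  rw [List.getD_eq_getElem _ _ he]
  obtain _ | ⟨a, t⟩ := S
  · simp at he
  obtain _ | e := e
  · simp at h0
  have he' : e < t.length := by simpa using he
  have := (List.pairwise_cons.1 hS).1 _ (List.getElem_mem he')
  exact ⟨by simpa using this, hp.isChain⟩

lemma hook_zero {S : List ℕ} (he : 0 < S.length) : hook S 0 = S := by
  obtain _ | ⟨a, t⟩ := S
  · simp at he
  · simp [hook]

/-- A hook that is a suffix of another hook equals it, since the letters of a hook other than
the first start no descent. -/
lemma hook_suffix {h h' : List ℕ} (hh : IsHook h) (hh' : IsHook h') (hs : h <:+ h') : h = h' := by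
  obtain _ | ⟨a, _ | ⟨b, t⟩⟩ := h
  · exact hh.elim
  · exact hh.elim
  obtain _ | ⟨c, _ | ⟨d, u⟩⟩ := h'
  · exact hh'.elim
  · exact hh'.elim
  rcases List.suffix_cons_iff.1 hs with h | h
  · exact h
  · have h1 : (a :: b :: t).IsChain (· < ·) := hh'.2.suffix h
    have h2 := hh.1
    have h3 : a < b := (List.isChain_cons_cons.1 h1).1
    omega

/-- Uniqueness of the last hook of a word. -/
lemma hook_unique {u u' h h' : List ℕ} (hh : IsHook h) (hh' : IsHook h')
    (he : u ++ h = u' ++ h') : u = u' ∧ h = h' := by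
  have : h = h' := by
    rcases List.suffix_or_suffix_of_suffix (List.suffix_append u h)
      (he ▸ List.suffix_append u' h') with h1 | h1
    · exact hook_suffix hh hh' h1
    · exact (hook_suffix hh' hh h1).symm
  subst this
  exact ⟨List.append_cancel_right he, rfl⟩

lemma not_isHook_suffix {u h S : List ℕ} (hS : S.Pairwise (· < ·)) (hh : IsHook h) :
    u ++ h ≠ S := by
  rintro rfl
  obtain _ | ⟨a, _ | ⟨b, t⟩⟩ := h
  · exact hh.elim
  · exact hh.elim
  have h1 := (List.pairwise_append.1 hS).2.1
  have h2 : a < b := (List.pairwise_cons.1 h1).1 b (by simp)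
  have h3 := hh.1
  omega

/-! ### Splitting off the special reverse wave -/

/-- The effect of `decRun` on the descents of `hi :: t`, where `v` is what follows the run: a next
letter `x` ends the run because it is either below `lo`, hence one more descent, or above the last
letter of `hi :: decRun hi lo t`, hence no descent. -/
lemma decRun_spec (lo : ℕ) (t : List ℕ) (hi : ℕ) (hlt : lo < hi) (hn : (hi :: t).Nodup)
    (hlo : lo ∉ t) :
    ∃ v, t = decRun hi lo t ++ v ∧ (hi :: decRun hi lo t).Pairwise (· > ·) ∧
      (∀ y ∈ decRun hi lo t, lo < y) ∧
      ((v = [] ∧ des (hi :: t) = (decRun hi lo t).length) ∨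
        ∃ x v', v = x :: v' ∧
          ((x < lo ∧ des (hi :: t) = (decRun hi lo t).length + 1 + des v) ∨
           (∃ y, (hi :: decRun hi lo t).reverse[0]? = some y ∧ y < x ∧
             des (hi :: t) = (decRun hi lo t).length + des v))) := by
  induction t generalizing hi with
  | nil => exact ⟨[], by simp [decRun, des]⟩
  | cons b t ih =>
    have hb : b ≠ hi := fun h => by simp [h] at hn
    have hb' : b ≠ lo := fun h => by simp [h] at hlo
    by_cases h : b < hi ∧ lo < b
    · obtain ⟨v, h1, h2, h3, h4⟩ := ih b h.2 (List.pairwise_cons.1 hn).2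
        (fun h => hlo (List.mem_cons_of_mem _ h))
      have hd : decRun hi lo (b :: t) = b :: decRun b lo t := by simp [decRun, h]
      rw [hd]
      refine ⟨v, by simp [← h1], ?_, ?_, ?_⟩
      · refine List.pairwise_cons.2 ⟨?_, h2⟩
        intro y hy
        rcases List.mem_cons.1 hy with rfl | hy
        · exact h.1
        · exact lt_trans ((List.pairwise_cons.1 h2).1 y hy) h.1
      · intro y hy
        rcases List.mem_cons.1 hy with rfl | hy
        · exact h.2
        · exact h3 y hy
      · have hdes : des (hi :: b :: t) = 1 + des (b :: t) := by simp [des, h.1]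
        rw [hdes, List.length_cons]
        rcases h4 with ⟨h5, h6⟩ | ⟨x, v', h5, ⟨h6, h7⟩ | ⟨y, h6, h7, h8⟩⟩
        · exact Or.inl ⟨h5, by omega⟩
        · exact Or.inr ⟨x, v', h5, Or.inl ⟨h6, by omega⟩⟩
        · refine Or.inr ⟨x, v', h5, Or.inr ⟨y, ?_, h7, by omega⟩⟩
          rw [List.reverse_cons, List.getElem?_append_left (by simp)]
          exact h6
    · have hd : decRun hi lo (b :: t) = [] := by simp [decRun, h]
      rw [hd]
      refine ⟨b :: t, by simp, by simp, by simp, Or.inr ⟨b, t, rfl, ?_⟩⟩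
      by_cases hbl : b < lo
      · refine Or.inl ⟨hbl, ?_⟩
        have : b < hi := by omega
        simp [des, this]
      · refine Or.inr ⟨hi, by simp, by omega, ?_⟩
        have : ¬ b < hi := by omega
        simp [des, this]

/-- The form of `srw` and its contribution to the descents, generalized from the convention
`w₀ = 0` to an arbitrary letter `lo` before `w`. The increasing word `S` lists the entries of
`srwAux lo w`, and its `k` first ones precede the peak. -/
lemma srwAux_spec (w : List ℕ) (lo : ℕ) (h0 : w ≠ []) (hlt : ∀ a ∈ w.head?, lo < a)
    (hn : (lo :: w).Nodup) :
    ∃ S k v, (lo :: S).Pairwise (· < ·) ∧ k < S.length ∧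
      srwAux lo w = S.take k ++ (S.drop k).reverse ∧ w = srwAux lo w ++ v ∧
      ((v = [] ∧ des w + k + 1 = S.length) ∨
        ∃ x v', v = x :: v' ∧
          ((∃ y, (lo :: S)[k]? = some y ∧ x < y ∧ des w + k = S.length + des v) ∨
           (∃ y, S[k]? = some y ∧ y < x ∧ k + 2 ≤ S.length ∧
             des w + k + 1 = S.length + des v))) := by
  induction w generalizing lo with
  | nil => exact absurd rfl h0
  | cons a t ih =>
    have hla : lo < a := hlt a (by simp)
    have hn' := (List.pairwise_cons.1 hn).2
    obtain _ | ⟨b, t⟩ := t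
    · exact ⟨[a], 0, [], by simp [srwAux, des, hla]⟩
    have hab : a ≠ b := fun h => by simp [h] at hn
    by_cases h : a < b
    · obtain ⟨S, k, v, h1, h2, h3, h4, h5⟩ := ih a (by simp) (by simpa using h) hn'
      have hd : srwAux lo (a :: b :: t) = a :: srwAux a (b :: t) := by simp [srwAux, h]
      have hdes : des (a :: b :: t) = des (b :: t) := by
        have : ¬ b < a := by omega
        simp [des, this]
      rw [hd, hdes]
      refine ⟨a :: S, k + 1, v, ?_, by simpa using h2, by simp [h3],
        by simpa using h4, ?_⟩
      · refine List.pairwise_cons.2 ⟨?_, h1⟩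
        intro y hy
        rcases List.mem_cons.1 hy with rfl | hy
        · exact hla
        · exact lt_trans hla ((List.pairwise_cons.1 h1).1 y hy)
      · simp only [List.length_cons, List.getElem?_cons_succ]
        rcases h5 with ⟨h5, h6⟩ | ⟨x, v', h5, ⟨y, h6, h7, h8⟩ | ⟨y, h6, h7, h8, h9⟩⟩
        · exact Or.inl ⟨h5, by omega⟩
        · exact Or.inr ⟨x, v', h5, Or.inl ⟨y, h6, h7, by omega⟩⟩
        · exact Or.inr ⟨x, v', h5, Or.inr ⟨y, h6, h7, by omega, by omega⟩⟩
    · have hba : b < a := by omega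
      have hd : srwAux lo (a :: b :: t) = a :: decRun a lo (b :: t) := by simp [srwAux, h]
      have hlo : lo ∉ b :: t := fun hm =>
        (List.pairwise_cons.1 hn).1 lo (List.mem_cons_of_mem _ hm) rfl
      obtain ⟨v, h1, h2, h3, h4⟩ := decRun_spec lo (b :: t) a hla hn' hlo
      rw [hd]
      refine ⟨(a :: decRun a lo (b :: t)).reverse, 0, v, ?_, by simp, by simp,
        by simpa using h1, ?_⟩
      · refine List.pairwise_cons.2 ⟨?_, List.pairwise_reverse.2 h2⟩
        intro y hy
        rcases List.mem_cons.1 (List.mem_reverse.1 hy) with rfl | hy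
        · exact hla
        · exact h3 y hy
      · simp only [List.length_reverse, List.length_cons]
        rcases h4 with ⟨h5, h6⟩ | ⟨x, v', h5, ⟨h6, h7⟩ | ⟨y, h6, h7, h8⟩⟩
        · exact Or.inl ⟨h5, by omega⟩
        · exact Or.inr ⟨x, v', h5, Or.inl ⟨lo, by simp, h6, by omega⟩⟩
        · refine Or.inr ⟨x, v', h5, Or.inr ⟨y, h6, h7, ?_, by omega⟩⟩
          -- An empty run would make the next letter `b` both smaller and larger than `a`.
          rcases hr : decRun a lo (b :: t) with _ | ⟨c, r⟩
          · rw [hr] at h1 h6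
            simp only [h5, List.nil_append, List.cons.injEq] at h1
            simp at h6
            omega
          · simp

/-- The word `w` splits as `srw w` followed by `v`, where `srw w` lists the first `k` entries of
the increasing word `S` and then the others in decreasing order, and `w` has `e` more descents
than `v`. The last field relates `k` and `e`; when `v` starts with `x`, maximality of
`srw w` excludes that `x` lies between the entries of index `k - 1` and `k` of `S`. -/
structure Split (w S : List ℕ) (k e : ℕ) (v : List ℕ) : Prop where
  sorted : S.Pairwise (· < ·)
  k_lt : k < S.length
  srw_eq : srw w = S.take k ++ (S.drop k).reverse
  eq_append : w = srw w ++ v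
  des_eq : des w = des v + e
  e_lt : e < S.length
  spec : (v = [] ∧ e + k + 1 = S.length) ∨
    (0 < e ∧ ∃ x v', v = x :: v' ∧
      ((∃ y j, k = j + 1 ∧ S[j]? = some y ∧ x < y ∧ e + k = S.length) ∨
       (∃ y, S[k]? = some y ∧ y < x ∧ e + k + 1 = S.length)))

lemma exists_split {w : List ℕ} (h0 : w ≠ []) (hn : (0 :: w).Nodup) :
    ∃ S k e v, Split w S k e v := by
  obtain ⟨S, k, v, h1, h2, h3, h4, h5⟩ := srwAux_spec w 0 h0 (by
    intro a ha
    refine Nat.pos_of_ne_zero ?_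
    rintro rfl
    exact (List.pairwise_cons.1 hn).1 0 (List.mem_of_mem_head? ha) rfl) hn
  have hS := (List.pairwise_cons.1 h1).2
  rcases h5 with ⟨h5, h6⟩ | ⟨x, v', h5, ⟨y, h6, h7, h8⟩ | ⟨y, h6, h7, h8, h9⟩⟩
  · exact ⟨S, k, des w, v, hS, h2, h3, h4, by simp [h5, des], by omega, Or.inl ⟨h5, h6⟩⟩
  · obtain _ | j := k
    · simp at h6
      omega
    · exact ⟨S, j + 1, S.length - (j + 1), v, hS, h2, h3, h4, by omega, by omega,
        Or.inr ⟨by omega, x, v', h5, Or.inl ⟨y, j, rfl, by simpa using h6, h7, by omega⟩⟩⟩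
  · exact ⟨S, k, S.length - (k + 1), v, hS, h2, h3, h4, by omega, by omega,
        Or.inr ⟨by omega, x, v', h5, Or.inr ⟨y, h6, h7, by omega⟩⟩⟩

/-- `w` is determined by the entries of `srw w`, the remaining word `v` and the number `e`:
for given `S` and `v`, different values of `k` yield different values of `e`. -/
lemma Split.unique {w w' S v : List ℕ} {k k' e : ℕ} (h : Split w S k e v)
    (h' : Split w' S k' e v) : w = w' := by
  have hk : k = k' := by
    rcases h.spec with ⟨h1, h2⟩ | ⟨-, x, t, h1, h2⟩ <;>
    rcases h'.spec with ⟨h1', h2'⟩ | ⟨-, x', t', h1', h2'⟩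
    · omega
    · simp [h1] at h1'
    · simp [h1] at h1'
    · obtain ⟨rfl, rfl⟩ : x = x' ∧ t = t' := by simpa [h1] using h1'
      rcases h2 with ⟨y, j, rfl, h3, h4, h5⟩ | ⟨y, h3, h4, h5⟩ <;>
      rcases h2' with ⟨y', j', rfl, h3', h4', h5'⟩ | ⟨y', h3', h4', h5'⟩
      · omega
      -- The next two cases would require `x < S[j]` and `S[j] < x` for the same index `j`.
      · obtain rfl : j = k' := by omega
        rw [h3] at h3'
        simp at h3'
        omega
      · obtain rfl : j' = k := by omega
        rw [h3] at h3'
        simp at h3'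
        omega
      · omega
  subst hk
  rw [h.eq_append, h'.eq_append, h.srw_eq, h'.srw_eq]

lemma Split.srw_perm {w S v : List ℕ} {k e : ℕ} (h : Split w S k e v) : (srw w).Perm S := by
  rw [h.srw_eq]
  conv_rhs => rw [← List.take_append_drop k S]
  exact (List.reverse_perm _).append_left _

lemma Split.length_lt {w S v : List ℕ} {k e : ℕ} (h : Split w S k e v) :
    v.length < w.length := by
  have h1 := congrArg List.length h.eq_append
  have h2 := h.srw_perm.length_eq
  have h3 := h.k_lt
  simp at h1
  omega

lemma Split.nodup {w S v : List ℕ} {k e : ℕ} (h : Split w S k e v) (hn : (0 :: w).Nodup) :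
    (0 :: v).Nodup := by
  refine hn.sublist (List.Sublist.cons_cons _ ?_)
  conv_rhs => rw [h.eq_append]
  exact List.sublist_append_right _ _

/-! ### The map on words -/

/-- The bijection on words: `srw w` is removed from the front of `w` and becomes a last hook on
the same entries, with as many inversions as its removal costs descents. -/
def theta (w : List ℕ) : List ℕ :=
  if h : w = [] ∨ srw w = [] then [] else
    theta (w.drop (srw w).length) ++
      hook ((srw w).insertionSort (· ≤ ·)) (des w - des (w.drop (srw w).length))
termination_by w.length
decreasing_by
  push Not at h
  have h1 := List.length_pos_iff.2 h.1
  have h2 := List.length_pos_iff.2 h.2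
  rw [List.length_drop]
  omega

lemma theta_nil : theta [] = [] := by
  rw [theta]
  simp

lemma Split.theta_eq {w S v : List ℕ} {k e : ℕ} (h : Split w S k e v) :
    theta w = theta v ++ hook S e := by
  have hl := h.length_lt
  have hs : srw w ≠ [] := by
    intro h1
    have h2 := h.eq_append
    rw [h1, List.nil_append] at h2
    rw [h2] at hl
    exact lt_irrefl _ hl
  have hw : w ≠ [] := by
    rintro rfl
    exact hs rfl
  have hv : w.drop (srw w).length = v :=
    (congrArg (List.drop (srw w).length) h.eq_append).trans List.drop_left
  have hS : (srw w).insertionSort (· ≤ ·) = S :=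
    (((List.perm_insertionSort _ _).trans h.srw_perm).eq_of_pairwise'
      (List.pairwise_insertionSort _ _) (h.sorted.imp le_of_lt))
  have hd : des w - des v = e := by
    have := h.des_eq
    omega
  rw [theta, dif_neg (by simp [hs, hw]), hv, hS, hd]

/-- Throughout, `(0 :: w).Nodup` says that the letters of `w` are distinct and positive. -/
lemma theta_perm (w : List ℕ) (hn : (0 :: w).Nodup) : (theta w).Perm w := by
  by_cases h0 : w = []
  · simp [h0, theta_nil]
  obtain ⟨S, k, e, v, h⟩ := exists_split h0 hn
  rw [h.theta_eq]
  have hlt := h.length_lt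
  conv_rhs => rw [h.eq_append]
  exact ((theta_perm v (h.nodup hn)).append ((hook_perm h.e_lt).trans h.srw_perm.symm)).trans
    List.perm_append_comm
termination_by w.length

lemma theta_fact (w : List ℕ) (hn : (0 :: w).Nodup) :
    ∃ γ hs, IsHookFact (theta w) γ hs ∧ des w = lecVal hs ∧ (hs.getLastD γ).Perm (srw w) := by
  by_cases h0 : w = []
  · subst h0
    exact ⟨[], [], ⟨List.isChain_nil, by simp, by simp [theta_nil]⟩, rfl, List.Perm.refl _⟩
  obtain ⟨S, k, e, v, h⟩ := exists_split h0 hn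
  have hlt := h.length_lt
  have hS : 0 < S.length := by have := h.k_lt; omega
  rcases Nat.eq_zero_or_pos e with rfl | he
  · obtain ⟨rfl, -⟩ : v = [] ∧ 0 + k + 1 = S.length := by simpa using h.spec
    refine ⟨S, [], ⟨h.sorted.isChain, by simp, ?_⟩, ?_, ?_⟩
    · simp [h.theta_eq, theta_nil, hook_zero hS]
    · simp [h.des_eq, lecVal, des]
    · exact h.srw_perm.symm
  · obtain ⟨γ, hs, ⟨h1, h2, h3⟩, h4, -⟩ := theta_fact v (h.nodup hn)
    refine ⟨γ, hs ++ [hook S e], ⟨h1, ?_, ?_⟩, ?_, ?_⟩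
    · intro a ha
      rcases List.mem_append.1 ha with ha | ha
      · exact h2 a ha
      · rw [List.mem_singleton.1 ha]
        exact isHook_hook h.sorted h.e_lt he
    · simp [h.theta_eq, h3]
    · simp [h.des_eq, h4, lecVal, inv_hook h.sorted h.e_lt]
    · simpa using (hook_perm h.e_lt).trans h.srw_perm.symm
termination_by w.length

lemma Split.eq_nil {w S v : List ℕ} {k : ℕ} (h : Split w S k 0 v) : v = [] ∧ theta w = S := by
  have h1 : v = [] ∧ 0 + k + 1 = S.length := by simpa using h.spec
  have hS : 0 < S.length := by omega
  exact ⟨h1.1, by simp [h.theta_eq, h1.1, theta_nil, hook_zero hS]⟩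

/-- The last hook of `theta w` gives back the entries of `srw w` and, through its inversions, the
number `e`; the rest gives `v` by induction, and these data determine `w`. The case of no hook at
all is the one where `w` is increasing. -/
lemma theta_injective (w w' : List ℕ) (hn : (0 :: w).Nodup) (hn' : (0 :: w').Nodup)
    (heq : theta w = theta w') : w = w' := by
  have hlen : w.length = w'.length := by
    rw [← (theta_perm w hn).length_eq, ← (theta_perm w' hn').length_eq, heq]
  by_cases h0 : w = []
  · subst h0
    exact (List.length_eq_zero_iff.1 hlen.symm).symm
  have h0' : w' ≠ [] := by
    rintro rfl
    exact h0 (List.length_eq_zero_iff.1 hlen)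
  obtain ⟨S, k, e, v, h⟩ := exists_split h0 hn
  obtain ⟨S', k', e', v', h'⟩ := exists_split h0' hn'
  have hlt := h.length_lt
  rcases Nat.eq_zero_or_pos e with rfl | he <;> rcases Nat.eq_zero_or_pos e' with rfl | he'
  · obtain ⟨rfl, h1⟩ := h.eq_nil
    obtain ⟨rfl, h1'⟩ := h'.eq_nil
    obtain rfl : S = S' := by rw [← h1, ← h1', heq]
    exact h.unique h'
  · refine absurd ?_ (not_isHook_suffix h.sorted (u := theta v')
      (isHook_hook h'.sorted h'.e_lt he'))
    rw [← h'.theta_eq, ← heq, h.eq_nil.2]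
  · refine absurd ?_ (not_isHook_suffix h'.sorted (u := theta v)
      (isHook_hook h.sorted h.e_lt he))
    rw [← h.theta_eq, heq, h'.eq_nil.2]
  · rw [h.theta_eq, h'.theta_eq] at heq
    obtain ⟨h1, h2⟩ := hook_unique (isHook_hook h.sorted h.e_lt he)
      (isHook_hook h'.sorted h'.e_lt he') heq
    obtain rfl : S = S' :=
      ((hook_perm h.e_lt).symm.trans (h2 ▸ hook_perm h'.e_lt)).eq_of_pairwise'
        (h.sorted.imp le_of_lt) (h'.sorted.imp le_of_lt)
    obtain rfl : e = e' := by
      rw [← inv_hook h.sorted h.e_lt, ← inv_hook h'.sorted h'.e_lt, h2]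
    obtain rfl : v = v' := theta_injective v v' (h.nodup hn) (h'.nodup hn') h1
    exact h.unique h'
termination_by w.length

/-! ### Passing to permutations -/

lemma word_nodup {n : ℕ} (σ : Equiv.Perm (Fin n)) : (0 :: word σ).Nodup := by
  rw [List.nodup_cons]
  refine ⟨by simp [word, List.mem_ofFn], List.nodup_ofFn.2 fun i j hij => ?_⟩
  simpa [Fin.val_inj] using hij

lemma word_injective {n : ℕ} : Function.Injective (word (n := n)) := by
  intro σ τ h
  ext i
  have := congrFun (List.ofFn_injective h) i
  simpa using this

lemma exists_word_s9 {n : ℕ} (σ : Equiv.Perm (Fin n)) {l : List ℕ} (h : l.Perm (word σ)) :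
    ∃ τ : Equiv.Perm (Fin n), word τ = l := by
  have hl : l.length = n := by simpa [word] using h.length_eq
  have hnd : l.Nodup := h.nodup_iff.2 (List.nodup_cons.1 (word_nodup σ)).2
  have hmem : ∀ x ∈ l, 0 < x ∧ x ≤ n := by
    intro x hx
    have hx' := h.mem_iff.1 hx
    simp only [word, List.mem_ofFn] at hx'
    obtain ⟨i, rfl⟩ := hx'
    omega
  have hm : ∀ i : Fin n, 0 < l[i.1] ∧ l[i.1] ≤ n := fun i => hmem _ (List.getElem_mem _)
  let f : Fin n → Fin n := fun i => ⟨l[i.1] - 1, by have := hm i; omega⟩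
  have hf : Function.Injective f := by
    intro i j hij
    have h1 : l[i.1] - 1 = l[j.1] - 1 := congrArg Fin.val hij
    have h2 := hm i
    have h3 := hm j
    exact Fin.ext ((hnd.getElem_inj_iff).1 (by omega : l[i.1] = l[j.1]))
  refine ⟨Equiv.ofBijective f (Finite.injective_iff_bijective.1 hf), ?_⟩
  refine List.ext_getElem (by simp [word, hl]) fun i h1 h2 => ?_
  have := hm ⟨i, by omega⟩
  simp only [word, List.getElem_ofFn, Equiv.ofBijective_apply, f]
  simp only at this
  omega

end Paper

/-- for every `n` there is a bijection `θ` of `S_n` such that for every `σ`,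
`des σ = lec (θ σ)` and the rightmost hook of the hook factorization of `θ σ` has the same
length and the same set of entries as the special reverse wave `srw σ`. -/
theorem Paper.statement9 (n : ℕ) :
    ∃ θ : Equiv.Perm (Fin n) ≃ Equiv.Perm (Fin n),
      ∀ σ : Equiv.Perm (Fin n), ∃ γ hs,
        IsHookFact (word (θ σ)) γ hs ∧
        des (word σ) = lecVal hs ∧
        (hs.getLastD γ).length = (srw (word σ)).length ∧
        (hs.getLastD γ).toFinset = (srw (word σ)).toFinset := by
  choose f hf using fun σ : Equiv.Perm (Fin n) =>
    exists_word_s9 σ (theta_perm (word σ) (word_nodup σ))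
  have hinj : Function.Injective f := by
    intro σ τ h
    apply word_injective
    apply theta_injective _ _ (word_nodup σ) (word_nodup τ)
    rw [← hf, ← hf, h]
  refine ⟨Equiv.ofBijective f (Finite.injective_iff_bijective.1 hinj), fun σ => ?_⟩
  obtain ⟨γ, hs, h1, h2, h3⟩ := theta_fact (word σ) (word_nodup σ)
  refine ⟨γ, hs, ?_, h2, h3.length_eq, List.toFinset_eq_of_perm _ _ h3⟩
  rw [Equiv.ofBijective_apply, hf]
  exact h1
end
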